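/- arXiv:2209.11339 — 7 statements merged into one kernel-verified Lean document; each statement's English description precedes it below -/
import Mathlib

section
/- Let L and M be complete lattices and let f : L → M be a surjective map that preserves arbitrary suprema (f (sSup s) = sSup (f '' s) for every s ⊆ L). Then a subset U of M is Scott-open if and only if its preimage f⁻¹(U) is Scott-open in L. Equivalently, the Scott topology on M coincides with the quotient (coinduced) topology along f when L carries its Scott topology. -/
open TopologicalSpace

/-- A subset of a complete lattice is Scott-open if it is an upper set and every nonempty
directed set whose supremum lies in it meets it. -/
def ScottOpen {α : Type*} [CompleteLattice α] (U : Set α) : Prop :=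
  IsUpperSet U ∧
    ∀ d : Set α, d.Nonempty → DirectedOn (· ≤ ·) d → sSup d ∈ U → (d ∩ U).Nonempty

/-- The Scott topology on a complete lattice. -/
def scottTopology (α : Type*) [CompleteLattice α] : TopologicalSpace α where
  IsOpen := ScottOpen
  isOpen_univ := ⟨isUpperSet_univ, fun d hd _ _ => by simpa using hd⟩
  isOpen_inter := by
    rintro U V ⟨hU, hU'⟩ ⟨hV, hV'⟩
    refine ⟨hU.inter hV, fun d hd hdir hsup => ?_⟩
    obtain ⟨a, ha, haU⟩ := hU' d hd hdir hsup.1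
    obtain ⟨b, hb, hbV⟩ := hV' d hd hdir hsup.2
    obtain ⟨c, hc, hac, hbc⟩ := hdir a ha b hb
    exact ⟨c, hc, hU hac haU, hV hbc hbV⟩
  isOpen_sUnion := by
    intro S hS
    refine ⟨isUpperSet_sUnion fun s hs => (hS s hs).1, fun d hd hdir hsup => ?_⟩
    obtain ⟨U, hU, hmem⟩ := hsup
    obtain ⟨a, ha, haU⟩ := (hS U hU).2 d hd hdir hmem
    exact ⟨a, ha, U, hU, haU⟩

/-- A map of complete lattices that preserves suprema has an upper adjoint. -/
theorem galoisConnection_of_map_sSup {L M : Type*} [CompleteLattice L] [CompleteLattice M]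
    {f : L → M} (hsup : ∀ s : Set L, f (sSup s) = sSup (f '' s)) :
    GaloisConnection f (fun y => sSup {x | f x ≤ y}) := by
  have hmono : Monotone f := fun a b hab => by
    have h := hsup {a, b}
    rw [sSup_pair, sup_eq_right.2 hab, Set.image_pair, sSup_pair] at h
    exact h ▸ le_sup_left
  refine fun x y => ⟨fun h => le_sSup h, fun h => (hmono h).trans ?_⟩
  rw [hsup]
  exact sSup_le (Set.forall_mem_image.2 fun _ hz => hz)

/-- If `f : L → M` is a surjective map between complete lattices preserving
arbitrary suprema, then `U ⊆ M` is Scott-open iff `f ⁻¹' U` is Scott-open; i.e. the Scott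
topology on `M` is the quotient topology along `f`. -/
theorem scottOpen_iff_preimage_scottOpen_of_sSup_surjective
    {L M : Type*} [CompleteLattice L] [CompleteLattice M] (f : L → M)
    (hsurj : Function.Surjective f) (hsup : ∀ s : Set L, f (sSup s) = sSup (f '' s)) :
    ∀ U : Set M, ScottOpen U ↔ ScottOpen (f ⁻¹' U) := by
  intro U
  have gc := galoisConnection_of_map_sSup hsup
  set g : M → L := fun y => sSup {x | f x ≤ y}
  have hfg : Function.LeftInverse f g := fun y => by
    obtain ⟨x, rfl⟩ := hsurj y
    exact gc.l_u_l_eq_l x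
  constructor
  · rintro ⟨hup, hdir⟩
    refine ⟨hup.preimage gc.monotone_l, fun d hd hdd hmem => ?_⟩
    rw [Set.mem_preimage, hsup] at hmem
    obtain ⟨_, ⟨x, hx, rfl⟩, hxU⟩ :=
      hdir (f '' d) (hd.image f) (directedOn_image.2 (hdd.mono fun _ _ h => gc.monotone_l h)) hmem
    exact ⟨x, hx, hxU⟩
  · rintro ⟨hup, hdir⟩
    refine ⟨fun a b hab ha => ?_, fun d hd hdd hmem => ?_⟩
    · rw [← hfg a] at ha
      rw [← hfg b]
      exact hup (gc.monotone_u hab) ha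
    · have hgd : DirectedOn (· ≤ ·) (g '' d) :=
        directedOn_image.2 (hdd.mono fun _ _ h => gc.monotone_u h)
      have hgU : sSup (g '' d) ∈ f ⁻¹' U := by
        rwa [Set.mem_preimage, hsup, hfg.image_image]
      obtain ⟨_, ⟨y, hy, rfl⟩, hyU⟩ := hdir (g '' d) (hd.image g) hgd hgU
      exact ⟨y, hy, hfg y ▸ hyU⟩
end

section
/- Let G be a type. The evaluation map ev : Opens (G → Prop) × (G → Prop) → Prop, (U, f) ↦ (f ∈ U), is continuous, where G → Prop carries the product topology (each factor Prop having the Sierpiński topology), Opens (G → Prop) carries the Scott topology, and Prop carries the Sierpiński topology. Equivalently, the set {(U, f) | f ∈ U} is open in the product of the Scott topology and the product topology. -/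
open TopologicalSpace

/-- The opens containing a given compact set form a Scott-open family. -/
theorem IsCompact.scottOpen_setOf_subset_opens {X : Type*} [TopologicalSpace X] {K : Set X}
    (hK : IsCompact K) : ScottOpen {U : Opens X | K ⊆ U} := by
  refine ⟨fun U V hUV hU => Set.Subset.trans hU hUV, fun d hd hdir hsup => ?_⟩
  have : Nonempty d := hd.to_subtype
  have hcover : K ⊆ ⋃ U : d, ((U : Opens X) : Set X) := by
    simpa [Opens.coe_sSup, Set.iUnion_subtype] using hsup
  obtain ⟨U, hU⟩ := hK.elim_directed_cover _ (fun U : d => U.1.isOpen) hcover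
    hdir.directed_val
  exact ⟨U, U.2, hU⟩

/-- A finite topological space is locally compact. -/
theorem LocallyCompactSpace.of_finite (X : Type*) [TopologicalSpace X] [Finite X] :
    LocallyCompactSpace X :=
  ⟨fun _ s hs => ⟨s, hs, subset_rfl, s.toFinite.isCompact⟩⟩

/-- Evaluation of opens at points is continuous for a locally compact space when the lattice of
opens carries the Scott topology. -/
theorem continuous_mem_opens_scottTopology (X : Type*) [TopologicalSpace X]
    [LocallyCompactSpace X] :
    letI : TopologicalSpace (Opens X) := scottTopology (Opens X)
    Continuous (fun p : Opens X × X => p.2 ∈ p.1) := by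
  let : TopologicalSpace (Opens X) := scottTopology (Opens X)
  refine continuous_Prop.2 (isOpen_iff_mem_nhds.2 ?_)
  rintro ⟨U, x⟩ hx
  obtain ⟨K, hK, hxK, hKU⟩ := exists_compact_subset U.isOpen hx
  have hopen : IsOpen {V : Opens X | K ⊆ V} := hK.scottOpen_setOf_subset_opens
  filter_upwards [prod_mem_nhds (hopen.mem_nhds hKU) (isOpen_interior.mem_nhds hxK)]
    with p hp using hp.1 (interior_subset hp.2)

/-- The evaluation map `(U, f) ↦ (f ∈ U)` is continuous on
`Opens (G → Prop) × (G → Prop)` when the lattice of opens carries the Scott topology. -/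
theorem continuous_eval_opens_pi_prop (G : Type*) :
    letI : TopologicalSpace (Opens (G → Prop)) := scottTopology (Opens (G → Prop))
    Continuous (fun p : Opens (G → Prop) × (G → Prop) => p.2 ∈ p.1) := by
  have := LocallyCompactSpace.of_finite Prop
  exact continuous_mem_opens_scottTopology (G → Prop)
end

section
/- Let X be a topological space and G a family of open subsets of X that is a subbasis for its topology, and let i : X → (G → Prop) be the continuous map i x g = (x ∈ g). Then for every topological space A and every continuous map u : A × X → Prop there exists a continuous map v : A → Opens (G → Prop) (with Opens (G → Prop) carrying the Scott topology) such that for all a ∈ A and x ∈ X, u (a, x) holds if and only if i x ∈ v a. (Machine space Σ^{Σ^G} together with the evaluation (m, x) ↦ (i x ∈ m) is a weak exponential of Σ by X.) -/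
open TopologicalSpace

/-- The canonical map from a space into `Σ^G` for a family `G` of subsets. -/
def iMap {X : Type*} (G : Set (Set X)) : X → (↥G → Prop) := fun x g => x ∈ (g : Set X)

open Topology

/-- A subbasis of a space exhibits it as having the topology induced from `Σ^G`. -/
theorem isInducing_iMap {X : Type*} [tX : TopologicalSpace X] {G : Set (Set X)}
    (hG : tX = generateFrom G) : IsInducing (iMap G) := by
  refine ⟨?_⟩
  have h : ∀ g : ↥G, induced (fun x => iMap G x g) sierpinskiSpace =
      generateFrom {(g : Set X)} := by
    intro g
    have hg : (fun x => iMap G x g) ⁻¹' {True} = (g : Set X) := by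
      ext x
      simp [iMap]
    rw [sierpinskiSpace, induced_generateFrom_eq, Set.image_singleton, hg]
  rw [induced_to_pi, iInf_congr h, ← generateFrom_iUnion, Set.iUnion_singleton_eq_range,
    Subtype.range_coe, hG]

/-- The slice of an open subset of a product over a point of the first factor. -/
def openSlice {A Y : Type*} [TopologicalSpace A] [TopologicalSpace Y] (W : Opens (A × Y))
    (a : A) : Opens Y :=
  ⟨{y | (a, y) ∈ W}, W.isOpen.preimage (Continuous.prodMk_right a)⟩

/-- The slices of an open subset of a product vary continuously for the Scott topology. -/
theorem continuous_openSlice {A Y : Type*} [TopologicalSpace A] [TopologicalSpace Y]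
    (W : Opens (A × Y)) :
    Continuous[inferInstance, scottTopology (Opens Y)] (openSlice W) := by
  let _ : TopologicalSpace (Opens Y) := scottTopology (Opens Y)
  refine continuous_def.2 fun U hU => isOpen_iff_mem_nhds.2 fun a ha => ?_
  let d : Set (Opens Y) := {O | ∃ N ∈ 𝓝 a, ∀ b ∈ N, O ≤ openSlice W b}
  have hd : openSlice W a ≤ sSup d := by
    intro y hy
    obtain ⟨N, O, hN, hO, haN, hyO, hNO⟩ :=
      isOpen_prod_iff.1 W.isOpen a y hy
    exact Opens.mem_sSup.2 ⟨⟨O, hO⟩, ⟨N, hN.mem_nhds haN, fun b hb z hz => hNO ⟨hb, hz⟩⟩, hyO⟩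
  have hdir : DirectedOn (· ≤ ·) d := by
    rintro O ⟨N, hN, hNO⟩ P ⟨M, hM, hMP⟩
    exact ⟨O ⊔ P, ⟨N ∩ M, Filter.inter_mem hN hM,
      fun b hb => sup_le (hNO b hb.1) (hMP b hb.2)⟩, le_sup_left, le_sup_right⟩
  obtain ⟨O, ⟨N, hN, hNO⟩, hOU⟩ := hU.2 d
    ⟨⊥, Set.univ, Filter.univ_mem, fun _ _ => bot_le⟩ hdir (hU.1 hd ha)
  exact Filter.mem_of_superset hN fun b hb => hU.1 (hNO b hb) hOU

/-- Machine space `Σ^{Σ^G}` with evaluation `(m, x) ↦ (i x ∈ m)` is a weak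
exponential of `Σ` by `X`: every continuous `u : A × X → Prop` factors through it. -/
theorem machine_space_weak_exponential {X : Type*} [tX : TopologicalSpace X]
    (G : Set (Set X)) (hG : tX = TopologicalSpace.generateFrom G)
    (A : Type*) [TopologicalSpace A] (u : A × X → Prop) (hu : Continuous u) :
    letI : TopologicalSpace (Opens (↥G → Prop)) := scottTopology (Opens (↥G → Prop))
    ∃ v : A → Opens (↥G → Prop), Continuous v ∧
      ∀ (a : A) (x : X), u (a, x) ↔ iMap G x ∈ v a := by
  obtain ⟨W, hW, hWu⟩ := ((IsInducing.id.prodMap (isInducing_iMap hG)).isOpen_iff).1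
    (continuous_Prop.1 hu)
  refine ⟨openSlice ⟨W, hW⟩, continuous_openSlice ⟨W, hW⟩, fun a x => ?_⟩
  exact (Set.ext_iff.1 hWu (a, x)).symm
end

section
/- Let X be a topological space and G a family of open subsets of X that is a subbasis for its topology, let i : X → (G → Prop) be the map i x g = (x ∈ g), and let q̄ : Opens (G → Prop) → Opens X be the map U ↦ i⁻¹(U). Suppose the evaluation map ev : Opens X × X → Prop, (U, x) ↦ (x ∈ U), is continuous when Opens X carries the Scott topology (as holds when X is locally compact). Then there exists a continuous map s : Opens X → Opens (G → Prop) (Scott topologies on both sides) such that q̄ ∘ s is the identity on Opens X and for all U ∈ Opens X and x ∈ X one has (i x ∈ s U) if and only if x ∈ U. -/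
open TopologicalSpace

open scoped Topology

/-- The map into `Σ^G` induces the topology generated by `G`. -/
theorem exists_opens_preimage_iMap {X : Type*} [tX : TopologicalSpace X] {G : Set (Set X)}
    (hG : tX = TopologicalSpace.generateFrom G) {N : Set X} (hN : IsOpen N) :
    ∃ W : Opens (↥G → Prop), iMap G ⁻¹' (W : Set (↥G → Prop)) = N := by
  have hle : TopologicalSpace.induced (iMap G) inferInstance ≤ tX := by
    rw [hG]
    refine le_generateFrom fun g hg => isOpen_induced_iff.2 ⟨{p | p ⟨g, hg⟩}, ?_, rfl⟩
    exact continuous_Prop.1 (continuous_apply (⟨g, hg⟩ : ↥G))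
  obtain ⟨W, hW, rfl⟩ := isOpen_induced_iff.1 (hle N hN)
  exact ⟨⟨W, hW⟩, rfl⟩

/-- The open sets of `Σ^G` whose preimage in `X` is contained in every member of some Scott-open
neighbourhood of `U`. -/
def wayBelowPreimages {X : Type*} [TopologicalSpace X] (G : Set (Set X)) (U : Opens X) :
    Set (Opens (↥G → Prop)) :=
  {W | ∃ O : Set (Opens X), ScottOpen O ∧ U ∈ O ∧
    ∀ V ∈ O, iMap G ⁻¹' (W : Set (↥G → Prop)) ⊆ V}

theorem wayBelowPreimages_mono {X : Type*} [TopologicalSpace X] (G : Set (Set X)) :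
    Monotone (wayBelowPreimages G) := by
  rintro U V hUV W ⟨O, hO, hU, hW⟩
  exact ⟨O, hO, hO.1 hUV hU, hW⟩

/-- A monotone map bounded at directed suprema by the supremum of its values is
Scott continuous. -/
theorem continuous_scottTopology_of_le_sSup_image {α β : Type*} [CompleteLattice α]
    [CompleteLattice β] {f : α → β} (hf : Monotone f)
    (hsup : ∀ d : Set α, d.Nonempty → DirectedOn (· ≤ ·) d → f (sSup d) ≤ sSup (f '' d)) :
    Continuous[scottTopology α, scottTopology β] f := by
  refine @Continuous.mk _ _ (scottTopology α) (scottTopology β) f ?_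
  rintro O ⟨hup, hdirO⟩
  refine ⟨hup.preimage hf, fun d hne hd hmem => ?_⟩
  have hdir : DirectedOn (· ≤ ·) (f '' d) := by
    rintro _ ⟨a, ha, rfl⟩ _ ⟨b, hb, rfl⟩
    obtain ⟨c, hc, hac, hbc⟩ := hd a ha b hb
    exact ⟨f c, ⟨c, hc, rfl⟩, hf hac, hf hbc⟩
  obtain ⟨_, ⟨a, ha, rfl⟩, haO⟩ :=
    hdirO _ (hne.image f) hdir (hup (hsup d hne hd) hmem)
  exact ⟨a, ha, haO⟩

theorem continuous_sSup_wayBelowPreimages {X : Type*} [TopologicalSpace X] (G : Set (Set X)) :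
    Continuous[scottTopology (Opens X), scottTopology (Opens (↥G → Prop))]
      fun U => sSup (wayBelowPreimages G U) := by
  refine continuous_scottTopology_of_le_sSup_image
    (fun U V h => sSup_le_sSup (wayBelowPreimages_mono G h)) fun d hne hd => ?_
  refine sSup_le ?_
  rintro W ⟨O, hO, hmem, hW⟩
  obtain ⟨V, hV, hVO⟩ := hO.2 d hne hd hmem
  exact (le_sSup (show W ∈ wayBelowPreimages G V from ⟨O, hO, hVO, hW⟩)).trans
    (le_sSup ⟨V, hV, rfl⟩)

/-- If evaluation is continuous, then every point of an open set `U` has a neighbourhood contained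
in every member of some Scott-open neighbourhood of `U`. -/
theorem exists_scottOpen_of_continuous_eval {X : Type*} [TopologicalSpace X]
    (hev : letI : TopologicalSpace (Opens X) := scottTopology (Opens X)
      Continuous (fun p : Opens X × X => p.2 ∈ p.1))
    {U : Opens X} {x : X} (hx : x ∈ U) :
    ∃ (O : Set (Opens X)) (N : Set X), ScottOpen O ∧ IsOpen N ∧ U ∈ O ∧ x ∈ N ∧
      ∀ V ∈ O, N ⊆ V := by
  let _ : TopologicalSpace (Opens X) := scottTopology (Opens X)
  have hopen : IsOpen {p : Opens X × X | p.2 ∈ p.1} := continuous_Prop.1 hev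
  obtain ⟨O, N, hO, hN, hUO, hxN, hsub⟩ := isOpen_prod_iff.1 hopen U x hx
  exact ⟨O, N, hO, hN, hUO, hxN, fun V hV y hy => hsub (Set.mk_mem_prod hV hy)⟩

theorem iMap_mem_sSup_wayBelowPreimages {X : Type*} [tX : TopologicalSpace X] {G : Set (Set X)}
    (hG : tX = TopologicalSpace.generateFrom G)
    (hev : letI : TopologicalSpace (Opens X) := scottTopology (Opens X)
      Continuous (fun p : Opens X × X => p.2 ∈ p.1))
    (U : Opens X) (x : X) : iMap G x ∈ sSup (wayBelowPreimages G U) ↔ x ∈ U := by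
  rw [Opens.mem_sSup]
  constructor
  · rintro ⟨W, ⟨O, -, hU, hW⟩, hx⟩
    exact hW U hU hx
  · intro hx
    obtain ⟨O, N, hO, hN, hUO, hxN, hsub⟩ := exists_scottOpen_of_continuous_eval hev hx
    obtain ⟨W, rfl⟩ := exists_opens_preimage_iMap hG hN
    exact ⟨W, ⟨O, hO, hUO, hsub⟩, hxN⟩

/-- If the evaluation map of `Opens X` (Scott topology) is continuous (as holds
for locally compact `X`), then the machine-space quotient `q̄ = Opens.comap i` has a
continuous section `s` compatible with evaluation. -/
theorem machine_space_quotient_has_section {X : Type*} [tX : TopologicalSpace X]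
    (G : Set (Set X)) (hG : tX = TopologicalSpace.generateFrom G)
    (hi : Continuous (iMap G))
    (hev : letI : TopologicalSpace (Opens X) := scottTopology (Opens X)
      Continuous (fun p : Opens X × X => p.2 ∈ p.1)) :
    letI : TopologicalSpace (Opens X) := scottTopology (Opens X)
    letI : TopologicalSpace (Opens (↥G → Prop)) := scottTopology (Opens (↥G → Prop))
    ∃ s : Opens X → Opens (↥G → Prop), Continuous s ∧
      (∀ U : Opens X, Opens.comap ⟨iMap G, hi⟩ (s U) = U) ∧
      ∀ (U : Opens X) (x : X), iMap G x ∈ s U ↔ x ∈ U := by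
  exact ⟨fun U => sSup (wayBelowPreimages G U), continuous_sSup_wayBelowPreimages G,
    fun U => Opens.ext (Set.ext (iMap_mem_sSup_wayBelowPreimages hG hev U)),
    iMap_mem_sSup_wayBelowPreimages hG hev⟩
end

section
/- Let X be a topological space and G a family of open subsets of X that is a subbasis for its topology, let i : X → (G → Prop) be the map i x g = (x ∈ g), and let q̄ : Opens (G → Prop) → Opens X be the map U ↦ i⁻¹(U). If q̄ has a continuous section s : Opens X → Opens (G → Prop) (i.e. s is continuous for the Scott topologies on both sides and q̄ ∘ s = id), then the evaluation map ev : Opens X × X → Prop, (U, x) ↦ (x ∈ U), is continuous when Opens X carries the Scott topology; moreover ev equals the composite of s × id with the map (V, x) ↦ (i x ∈ V). -/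
open TopologicalSpace

/-- Open subsets of a power of the Sierpiński space are upper sets. -/
theorem isUpperSet_of_isOpen_pi_Prop {ι : Type*} {V : Set (ι → Prop)} (hV : IsOpen V) :
    IsUpperSet V := by
  intro a b hab ha
  refine Specializes.mem_open (specializes_pi.2 fun j => ?_) hV ha
  by_cases hj : a j
  · have hb : b j := hab j hj
    simp [hj, hb, specializes_rfl]
  · simp [Specializes, hj]

/-- The open sets containing a given point form a Scott-open family. -/
theorem scottOpen_setOf_mem {Y : Type*} [TopologicalSpace Y] (y : Y) :
    ScottOpen {W : Opens Y | y ∈ W} := by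
  refine ⟨fun U V hUV hU => hUV hU, fun d _ _ hd => ?_⟩
  obtain ⟨W, hW, hy⟩ := Opens.mem_sSup.1 hd
  exact ⟨W, hW, hy⟩

/-- Every open neighbourhood of a point of `ι → Prop` contains a point `m` below it whose
upper set is open. -/
theorem exists_le_isOpen_Ici_of_mem_isOpen {ι : Type*} {V : Set (ι → Prop)} (hV : IsOpen V)
    {y : ι → Prop} (hy : y ∈ V) : ∃ m ∈ V, m ≤ y ∧ IsOpen (Set.Ici m) := by
  obtain ⟨I, u, hu, hIV⟩ := isOpen_pi_iff.1 hV y hy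
  refine ⟨fun g => g ∈ I ∧ y g, hIV fun g hg => ?_, fun g hg => hg.2, ?_⟩
  · have hgI : g ∈ I := hg
    simpa [hgI] using (hu g hgI).2
  · have hIci : Set.Ici (fun g => g ∈ I ∧ y g) = ⋂ g ∈ I, {z : ι → Prop | y g → z g} := by
      ext z
      simp [Pi.le_def]
    rw [hIci]
    refine isOpen_biInter_finset fun g _ => ?_
    by_cases hg : y g
    · simpa [hg] using continuous_Prop.1 (continuous_apply g)
    · simp [hg]

/-- Evaluation of open subsets of `ι → Prop` is continuous for the Scott topology. -/
theorem continuous_eval_opens_pi_Prop (ι : Type*) :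
    letI : TopologicalSpace (Opens (ι → Prop)) := scottTopology (Opens (ι → Prop))
    Continuous (fun p : Opens (ι → Prop) × (ι → Prop) => p.2 ∈ p.1) := by
  let _ : TopologicalSpace (Opens (ι → Prop)) := scottTopology (Opens (ι → Prop))
  refine continuous_Prop.2 (isOpen_prod_iff.2 fun V y hy => ?_)
  obtain ⟨m, hmV, hmy, hm⟩ := exists_le_isOpen_Ici_of_mem_isOpen V.isOpen hy
  exact ⟨{W | m ∈ W}, Set.Ici m, scottOpen_setOf_mem m, hm, hmV, hmy,
    fun p hp => isUpperSet_of_isOpen_pi_Prop p.1.isOpen hp.2 hp.1⟩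

/-- If the machine-space quotient `q̄ = Opens.comap i` has a continuous section
`s`, then the evaluation map of `Opens X` (Scott topology) is continuous, and the evaluation
equals the composite of `s × id` with `(V, x) ↦ (i x ∈ V)`. -/
theorem continuous_eval_of_section {X : Type*} [tX : TopologicalSpace X]
    (G : Set (Set X)) (hG : tX = TopologicalSpace.generateFrom G)
    (hi : Continuous (iMap G))
    (s : Opens X → Opens (↥G → Prop))
    (hs : letI : TopologicalSpace (Opens X) := scottTopology (Opens X)
      letI : TopologicalSpace (Opens (↥G → Prop)) := scottTopology (Opens (↥G → Prop))
      Continuous s)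
    (hsec : ∀ U : Opens X, Opens.comap ⟨iMap G, hi⟩ (s U) = U) :
    letI : TopologicalSpace (Opens X) := scottTopology (Opens X)
    Continuous (fun p : Opens X × X => p.2 ∈ p.1) ∧
      ∀ (U : Opens X) (x : X), (x ∈ U) ↔ iMap G x ∈ s U := by
  let _ : TopologicalSpace (Opens X) := scottTopology (Opens X)
  let _ : TopologicalSpace (Opens (↥G → Prop)) := scottTopology (Opens (↥G → Prop))
  have hev : ∀ (U : Opens X) (x : X), (x ∈ U) ↔ iMap G x ∈ s U := fun U x =>
    (SetLike.ext_iff.1 (hsec U) x).symm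
  refine ⟨?_, hev⟩
  have hcomp := (continuous_eval_opens_pi_Prop ↥G).comp (hs.prodMap hi)
  exact hcomp.congr fun p => propext (hev p.1 p.2).symm
end

section
/- Let X be a topological space and G a family of open subsets of X that is a subbasis for its topology, let i : X → (G → Prop) be the map i x g = (x ∈ g), and let q̄ : Opens (G → Prop) → Opens X be the map U ↦ i⁻¹(U). If q̄ has a continuous section s : Opens X → Opens (G → Prop) (i.e. s is continuous for the Scott topologies on both sides and q̄ ∘ s = id), then the frame Opens X is a continuous lattice: for every open U, U = sSup {V ∈ Opens X | V ≪ U}, where V ≪ U means that every nonempty directed family D ⊆ Opens X with U ≤ sSup D contains some W with V ≤ W. (That is, X is locally compact in the localic/core-compact sense.) -/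
open TopologicalSpace

/-- The way-below relation on a complete lattice. -/
def WayBelow {α : Type*} [CompleteLattice α] (b a : α) : Prop :=
  ∀ d : Set α, d.Nonempty → DirectedOn (· ≤ ·) d → a ≤ sSup d → ∃ c ∈ d, b ≤ c

/-- Every neighbourhood of a point `f` of `Σ^ι` contains a basic open set that requires finitely
many coordinates, all of them true at `f`. -/
theorem exists_finset_forall_imp_mem_of_isOpen {ι : Type*} {W : Set (ι → Prop)} (hW : IsOpen W)
    {f : ι → Prop} (hf : f ∈ W) :
    ∃ F : Finset ι, (∀ j ∈ F, f j) ∧ ∀ h : ι → Prop, (∀ j ∈ F, h j) → h ∈ W := by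
  classical
  obtain ⟨I, u, hu, hsub⟩ := isOpen_pi_iff.1 hW f hf
  refine ⟨I.filter f, fun j hj => (Finset.mem_filter.1 hj).2, fun h hh => hsub fun j hj => ?_⟩
  have hspec : h j ⤳ f j := by
    by_cases hfj : f j
    · have hhj : h j := hh j (Finset.mem_filter.2 ⟨hj, hfj⟩)
      simp [hfj, hhj, specializes_rfl]
    · simp [Specializes, hfj]
  exact hspec.mem_open (hu j hj).1 (hu j hj).2

/-- If the machine-space quotient `q̄ = Opens.comap i` has a continuous section,
then `Opens X` is a continuous lattice, i.e. `X` is locally compact (core-compact). -/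
theorem opens_continuous_lattice_of_section {X : Type*} [tX : TopologicalSpace X]
    (G : Set (Set X)) (hG : tX = TopologicalSpace.generateFrom G)
    (hi : Continuous (iMap G))
    (s : Opens X → Opens (↥G → Prop))
    (hs : letI : TopologicalSpace (Opens X) := scottTopology (Opens X)
      letI : TopologicalSpace (Opens (↥G → Prop)) := scottTopology (Opens (↥G → Prop))
      Continuous s)
    (hsec : ∀ U : Opens X, Opens.comap ⟨iMap G, hi⟩ (s U) = U) :
    ∀ U : Opens X, U = sSup {V : Opens X | WayBelow V U} := by
  intro U
  refine le_antisymm (fun x hx => ?_) (sSup_le fun V hV => ?_)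
  · have hmem (W : Opens X) (y : X) : y ∈ W ↔ iMap G y ∈ s W := by
      conv_lhs => rw [← hsec W]
      rfl
    obtain ⟨F, hFx, hF⟩ :=
      exists_finset_forall_imp_mem_of_isOpen (s U).isOpen ((hmem U x).1 hx)
    let p : ↥G → Prop := fun g => g ∈ F
    have hpU : p ∈ s U := hF p fun _ hg => hg
    have hopen : ScottOpen {W : Opens (↥G → Prop) | p ∈ W} :=
      ⟨fun _ _ hle hp => hle hp, fun d _ _ hp => Opens.mem_sSup.1 hp⟩
    have hpre : ScottOpen {W : Opens X | p ∈ s W} :=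
      (@continuous_def _ _ (scottTopology _) (scottTopology _) s).1 hs _ hopen
    let V : Opens X := ⟨⋂ g ∈ F, (g : Set X), isOpen_biInter_finset fun g _ => by
      rw [hG]
      exact isOpen_generateFrom_of_mem g.2⟩
    have hVle (W : Opens X) (hW : p ∈ s W) : V ≤ W := fun y hy => by
      obtain ⟨K, hKp, hK⟩ := exists_finset_forall_imp_mem_of_isOpen (s W).isOpen hW
      exact (hmem W y).2 (hK _ fun g hg => Set.mem_iInter₂.1 hy g (hKp g hg))
    refine Opens.mem_sSup.2 ⟨V, fun d hd hdir hUd => ?_, Set.mem_iInter₂.2 hFx⟩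
    obtain ⟨W, hWd, hW⟩ := hpre.2 d hd hdir (hpre.1 hUd hpU)
    exact ⟨W, hWd, hVle W hW⟩
  · obtain ⟨W, rfl, hVW⟩ := hV {U} (Set.singleton_nonempty U) (directedOn_singleton U)
      (le_of_eq sSup_singleton.symm)
    exact hVW
end

section
/- Let L be a frame and G a type, and let FF denote the free frame on G, realized as the complete lattice of lower sets of Finset G ordered by reverse inclusion (equivalently, of upper sets of Finset G under inclusion). Equip both L and FF with their Scott topologies. Suppose there exists a frame homomorphism e* : Opens(L, Scott) → Opens(FF, Scott) between the frames of Scott-open sets, together with a map r : Opens(FF, Scott) → Opens(L, Scott) preserving arbitrary suprema (unions) such that r ∘ e* = id (i.e. there is a semi-open quotient from machine space Σ^{Σ^G} onto O X with the Scott topology). Then L is a continuous lattice: every a ∈ L satisfies a = sSup {b | b ≪ a}, where b ≪ a means every nonempty directed set D with a ≤ sSup D contains some d with b ≤ d. (That is, the locale X with O X = L is locally compact.) -/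
open TopologicalSpace

/-- Complements of principal lower sets are Scott-open. -/
theorem scottOpen_compl_Iic {α : Type*} [CompleteLattice α] (s : α) :
    ScottOpen (Set.Iic s)ᶜ := by
  refine ⟨(isLowerSet_Iic s).compl, fun d _ _ hs => ?_⟩
  by_contra hne
  refine hs (sSup_le fun x hx => ?_)
  by_contra hxs
  exact hne ⟨x, hx, hxs⟩

/-- If every element of a Scott-open set `W` lies above `y`, then `y` is way below every element
of `W`. -/
theorem ScottOpen.wayBelow {α : Type*} [CompleteLattice α] {W : Set α} (hW : ScottOpen W)
    {x y : α} (hx : x ∈ W) (hy : W ⊆ Set.Ici y) : WayBelow y x := fun d hd hdir hle => by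
  obtain ⟨c, hcd, hcW⟩ := hW.2 d hd hdir (hW.1 hle hx)
  exact ⟨c, hcd, hy hcW⟩

/-- The principal upper set of a finitely generated lower set is Scott-open. -/
theorem scottOpen_Ici_lowerClosure_finset {P : Type*} [Preorder P] (F : Finset P) :
    ScottOpen (Set.Ici (lowerClosure (F : Set P))) := by
  classical
  refine ⟨isUpperSet_Ici _, fun d hd hdir hsup => ?_⟩
  have hF : ∀ p ∈ F, ∃ A ∈ d, p ∈ A := fun p hp => by
    have := lowerClosure_le.1 hsup hp
    simpa using this
  have key : ∃ A ∈ d, ∀ p ∈ F, p ∈ A := by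
    clear hsup
    induction F using Finset.induction_on with
    | empty => exact hd.imp fun A hA => ⟨hA, by simp⟩
    | insert p F _ ih =>
      obtain ⟨A, hA, hFA⟩ := ih fun q hq => hF q (Finset.mem_insert_of_mem hq)
      obtain ⟨B, hB, hpB⟩ := hF p (Finset.mem_insert_self p F)
      obtain ⟨C, hC, hAC, hBC⟩ := hdir A hA B hB
      refine ⟨C, hC, fun q hq => ?_⟩
      rcases Finset.mem_insert.1 hq with rfl | hq
      · exact hBC hpB
      · exact hAC (hFA q hq)
  obtain ⟨A, hA, hFA⟩ := key
  exact ⟨A, hA, lowerClosure_le.2 hFA⟩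

/-- A member of a Scott-open set of lower sets lies above a finitely generated member. -/
theorem ScottOpen.exists_lowerClosure_finset_mem {P : Type*} [Preorder P] {V : Set (LowerSet P)}
    (hV : ScottOpen V) {A : LowerSet P} (hA : A ∈ V) :
    ∃ F : Finset P, lowerClosure (F : Set P) ≤ A ∧ lowerClosure (F : Set P) ∈ V := by
  classical
  have hsup : A ≤ sSup ((fun F : Finset P => lowerClosure (F : Set P)) '' {F | (F : Set P) ⊆ A}) :=
    fun p hp => LowerSet.mem_sSup_iff.2
      ⟨_, ⟨{p}, by simpa using hp, rfl⟩, subset_lowerClosure (by simp)⟩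
  obtain ⟨_, ⟨F, hF, rfl⟩, hFV⟩ := hV.2 _ (Set.Nonempty.image _ ⟨∅, by simp⟩) (by
    rintro _ ⟨F, hF, rfl⟩ _ ⟨F', hF', rfl⟩
    refine ⟨_, ⟨F ∪ F', ?_, rfl⟩, lowerClosure_mono ?_, lowerClosure_mono ?_⟩
    · simpa using And.intro hF hF'
    · simp
    · simp) (hV.1 hsup hA)
  exact ⟨F, lowerClosure_le.2 hF, hFV⟩

/-- If each point of a Scott-open set `U` has a Scott-open neighbourhood that is contained in some
member of every Scott-open cover of `U`, for all `U`, then the lattice is continuous. -/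
theorem eq_sSup_wayBelow_of_exists_totally_below {α : Type*} [CompleteLattice α]
    (h : ∀ U : Set α, ScottOpen U → ∀ x ∈ U, ∃ W, ScottOpen W ∧ x ∈ W ∧
      ∀ S : Set (Set α), (∀ V ∈ S, ScottOpen V) → U ⊆ ⋃₀ S → ∃ V ∈ S, W ⊆ V) (a : α) :
    a = sSup {b : α | WayBelow b a} := by
  refine le_antisymm ?_ (sSup_le fun b hb => by
    simpa using hb {a} (Set.singleton_nonempty a) (directedOn_singleton a) sSup_singleton.ge)
  by_contra hs
  obtain ⟨W, hW, haW, hcov⟩ := h _ (scottOpen_compl_Iic (sSup {b : α | WayBelow b a})) a hs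
  obtain ⟨y, hy, hyW⟩ : ∃ y ∈ (Set.Iic (sSup {b : α | WayBelow b a}))ᶜ, W ⊆ Set.Ici y := by
    by_contra! hne
    obtain ⟨_, ⟨w, hw, rfl⟩, hWw⟩ := hcov ((fun w => (Set.Iic w)ᶜ) '' W)
      (by rintro _ ⟨w, _, rfl⟩; exact scottOpen_compl_Iic w) (fun y hy => by
        obtain ⟨w, hw, hyw⟩ := Set.not_subset.1 (hne y hy)
        exact ⟨_, ⟨w, hw, rfl⟩, hyw⟩)
    exact hWw hw le_rfl
  exact hy (le_sSup (hW.wayBelow haW hyW))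

/-- If there is a semi-open quotient from machine space `Σ^{Σ^G}` (the Scott
topology on the free frame on `G`, realized as upper sets of `Finset G` under inclusion)
onto `Opens (L, Scott)` — i.e. a frame homomorphism `e*` with a suprema-preserving
retraction `r` — then the frame `L` is a continuous lattice. -/
theorem continuous_lattice_of_semi_open_quotient {L : Type*} [Order.Frame L] (G : Type*) :
    letI : TopologicalSpace L := scottTopology L
    letI : TopologicalSpace (LowerSet (Finset G)ᵒᵈ) := scottTopology (LowerSet (Finset G)ᵒᵈ)
    (∃ (estar : FrameHom (Opens L) (Opens (LowerSet (Finset G)ᵒᵈ)))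
        (r : sSupHom (Opens (LowerSet (Finset G)ᵒᵈ)) (Opens L)),
        ∀ U : Opens L, r (estar U) = U) →
      ∀ a : L, a = sSup {b : L | WayBelow b a} := by
  let : TopologicalSpace L := scottTopology L
  let : TopologicalSpace (LowerSet (Finset G)ᵒᵈ) := scottTopology (LowerSet (Finset G)ᵒᵈ)
  rintro ⟨estar, r, hr⟩
  refine eq_sSup_wayBelow_of_exists_totally_below fun U hU x hx => ?_
  let basic (F : Finset (Finset G)ᵒᵈ) : Opens (LowerSet (Finset G)ᵒᵈ) :=
    ⟨Set.Ici (lowerClosure (F : Set (Finset G)ᵒᵈ)), scottOpen_Ici_lowerClosure_finset F⟩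
  have hmem :
      x ∈ r (sSup (basic '' {F | lowerClosure (F : Set (Finset G)ᵒᵈ) ∈ estar ⟨U, hU⟩})) := by
    have hle : estar ⟨U, hU⟩ ≤
        sSup (basic '' {F | lowerClosure (F : Set (Finset G)ᵒᵈ) ∈ estar ⟨U, hU⟩}) := fun A hA => by
      obtain ⟨F, hFA, hF⟩ := ScottOpen.exists_lowerClosure_finset_mem (estar ⟨U, hU⟩).2 hA
      exact Opens.mem_sSup.2 ⟨_, ⟨F, hF, rfl⟩, hFA⟩
    have hxU : x ∈ r (estar ⟨U, hU⟩) := by rw [hr]; exact hx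
    exact OrderHomClass.mono r hle hxU
  rw [map_sSup, Opens.mem_sSup] at hmem
  obtain ⟨_, ⟨_, ⟨F, hF, rfl⟩, rfl⟩, hxF⟩ := hmem
  refine ⟨r (basic F), (r (basic F)).2, hxF, fun S hS hUS => ?_⟩
  have hUS' : (⟨U, hU⟩ : Opens L) ≤ sSup {V : Opens L | (V : Set L) ∈ S} := fun y hy => by
    obtain ⟨V, hV, hyV⟩ := hUS hy
    exact Opens.mem_sSup.2 ⟨⟨V, hS V hV⟩, hV, hyV⟩
  have hF' := OrderHomClass.mono estar hUS' hF
  rw [map_sSup, Opens.mem_sSup] at hF'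
  obtain ⟨_, ⟨V, hV, rfl⟩, hFV⟩ := hF'
  have hle : basic F ≤ estar V := fun A hA => (estar V).2.1 hA hFV
  exact ⟨V, hV, (OrderHomClass.mono r hle).trans_eq (hr V)⟩
end
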